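/- arXiv:1808.05076 — 6 statements merged into one kernel-verified Lean document; each statement's English description precedes it below -/
import Mathlib

section
/- Let n, d ∈ ℕ and let R₀, …, R_d be linearly independent n×n complex matrices satisfying Rₖ * Rⱼ = ∑ᵢ c(k,i,j) • Rᵢ for complex constants c(k,i,j), and assume the n×n identity matrix lies in the span of R₀, …, R_d. Let M = ∑ₖ αₖ • Rₖ for complex coefficients αₖ and let ρ(M) = ∑ₖ αₖ • Pₖ be the corresponding (d+1)×(d+1) matrix. Then a complex number λ is an eigenvalue of M if and only if λ is an eigenvalue of ρ(M). In particular M has at most d+1 distinct eigenvalues. -/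
/-- `λ` is an eigenvalue of `M = ∑ αₖ • Rₖ` iff it is an eigenvalue of
`ρ(M) = ∑ αₖ • Pₖ`; in particular `M` has at most `d + 1` distinct eigenvalues. -/
theorem intersection_matrices_spectrum (n d : ℕ)
    (R : Fin (d + 1) → Matrix (Fin n) (Fin n) ℂ)
    (c : Fin (d + 1) → Fin (d + 1) → Fin (d + 1) → ℂ)
    (hind : LinearIndependent ℂ R)
    (hmul : ∀ k j, R k * R j = ∑ i, c k i j • R i)
    (hone : (1 : Matrix (Fin n) (Fin n) ℂ) ∈ Submodule.span ℂ (Set.range R))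
    (P : Fin (d + 1) → Matrix (Fin (d + 1)) (Fin (d + 1)) ℂ)
    (hP : ∀ k i j, P k i j = c k i j)
    (α : Fin (d + 1) → ℂ) :
    (∀ lam : ℂ, lam ∈ spectrum ℂ (∑ k, α k • R k) ↔ lam ∈ spectrum ℂ (∑ k, α k • P k)) ∧
    Set.Finite (spectrum ℂ (∑ k, α k • R k)) ∧
    (spectrum ℂ (∑ k, α k • R k)).ncard ≤ d + 1 := by
  set M := ∑ k, α k • R k with hM
  set Q := ∑ k, α k • P k with hQ
  have hML : ∀ v : Fin (d + 1) → ℂ, M * ∑ j, v j • R j = ∑ i, (Q.mulVec v) i • R i := by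
    intro v
    have h1 : ∀ i, (Q.mulVec v) i = ∑ k, ∑ j, α k * v j * c k i j := by
      intro i
      simp only [hQ, Matrix.mulVec, dotProduct, Matrix.sum_apply, Matrix.smul_apply, hP,
        Finset.sum_mul, smul_eq_mul]
      rw [Finset.sum_comm]
      exact Finset.sum_congr rfl fun k _ => Finset.sum_congr rfl fun j _ => by ring
    simp only [h1, hM, Finset.sum_mul_sum, Finset.sum_smul, smul_mul_smul_comm, hmul,
      Finset.smul_sum, smul_smul]
    rw [Finset.sum_comm (s := Finset.univ (α := Fin (d+1)))
      (f := fun i k => ∑ j, (α k * v j * c k i j) • R i)]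
    refine Finset.sum_congr rfl fun k _ => ?_
    rw [Finset.sum_comm]
  have hAB : ∀ (lam : ℂ) (v : Fin (d + 1) → ℂ),
      (algebraMap ℂ _ lam - M) * ∑ j, v j • R j
        = ∑ i, ((algebraMap ℂ (Matrix (Fin (d+1)) (Fin (d+1)) ℂ) lam - Q).mulVec v) i • R i := by
    intro lam v
    simp only [sub_mul, hML, Matrix.sub_mulVec, Pi.sub_apply, sub_smul, Finset.sum_sub_distrib,
      Algebra.algebraMap_eq_smul_one, Matrix.smul_mulVec, Matrix.one_mulVec, Pi.smul_apply,
      smul_mul_assoc, one_mul, Finset.smul_sum, smul_smul, smul_eq_mul]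
  have hiff : ∀ lam : ℂ, lam ∈ spectrum ℂ M ↔ lam ∈ spectrum ℂ Q := by
    intro lam
    rw [spectrum.mem_iff, spectrum.mem_iff, not_iff_not]
    constructor
    · intro hu
      rw [← Matrix.mulVec_injective_iff_isUnit]
      intro v w hvw
      have h2 : (algebraMap ℂ _ lam - M) * ∑ j, v j • R j
          = (algebraMap ℂ _ lam - M) * ∑ j, w j • R j := by
        rw [hAB, hAB]
        rw [hvw]
      have h3 := hu.mul_left_cancel h2
      exact (linearIndependent_iff_injective_fintypeLinearCombination.mp hind) (by
        simpa [Fintype.linearCombination_apply] using h3)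
    · intro hu
      rw [← Matrix.mulVec_surjective_iff_isUnit] at hu
      obtain ⟨w, hw⟩ := (Submodule.mem_span_range_iff_exists_fun ℂ).mp hone
      obtain ⟨v, hv⟩ := hu w
      have h2 := hAB lam v
      rw [hv, hw] at h2
      exact IsUnit.of_mul_eq_one _ h2
  have hset : spectrum ℂ M = spectrum ℂ Q := Set.ext hiff
  have hroots : spectrum ℂ Q = (Q.charpoly.roots.toFinset : Set ℂ) := by
    ext x
    rw [Matrix.mem_spectrum_iff_isRoot_charpoly]
    simp [Q.charpoly_monic.ne_zero]
  refine ⟨hiff, ?_, ?_⟩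
  · rw [hset, hroots]
    exact Finset.finite_toSet _
  · rw [hset, hroots, Set.ncard_coe_finset]
    refine (Multiset.toFinset_card_le _).trans ((Polynomial.card_roots' _).trans ?_)
    rw [Matrix.charpoly_natDegree_eq_dim]
    simp
end

section
/- Let n, d ∈ ℕ and let R₀, …, R_d be linearly independent n×n complex matrices satisfying Rₖ * Rⱼ = ∑ᵢ c(k,i,j) • Rᵢ for complex constants c(k,i,j), and assume the n×n identity matrix lies in the span of R₀, …, R_d. Let M = ∑ₖ αₖ • Rₖ and ρ(M) = ∑ₖ αₖ • Pₖ. Then M is diagonalizable (over ℂ) if and only if ρ(M) is diagonalizable. -/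
open Polynomial in
lemma diag_iff_aux {m : ℕ} (A : Matrix (Fin m) (Fin m) ℂ) :
    (∃ (U : Matrix (Fin m) (Fin m) ℂ) (D : Fin m → ℂ),
        IsUnit U ∧ A = U * Matrix.diagonal D * U⁻¹) ↔
    ∃ p : ℂ[X], Squarefree p ∧ aeval A p = 0 := by
  constructor
  · rintro ⟨U, D, hU, rfl⟩
    have hdet : IsUnit U.det := (Matrix.isUnit_iff_isUnit_det U).1 hU
    refine ⟨∏ μ ∈ Finset.univ.image D, (X - C μ), ?_, ?_⟩
    · exact (separable_prod_X_sub_C_iff' (f := fun μ : ℂ => μ)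
        (s := Finset.univ.image D)|>.2 (fun x _ y _ h => h)).squarefree
    · have key : ∀ p : ℂ[X], aeval (U * Matrix.diagonal D * U⁻¹) p
          = U * Matrix.diagonal (fun i => p.eval (D i)) * U⁻¹ := by
        intro p
        induction p using Polynomial.induction_on' with
        | add p q hp hq =>
          simp only [map_add, hp, hq, eval_add]
          rw [← Matrix.diagonal_add, Matrix.mul_add, Matrix.add_mul]
        | monomial k a =>
          have hpow : ∀ k : ℕ, (U * Matrix.diagonal D * U⁻¹) ^ k
              = U * Matrix.diagonal (fun i => D i ^ k) * U⁻¹ := by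
            intro k
            induction k with
            | zero => simp [Matrix.mul_nonsing_inv _ hdet]
            | succ k ih =>
              rw [pow_succ, ih]
              have : U * Matrix.diagonal (fun i => D i ^ k) * U⁻¹ * (U * Matrix.diagonal D * U⁻¹)
                = U * (Matrix.diagonal (fun i => D i ^ k) * (U⁻¹ * U) * Matrix.diagonal D) * U⁻¹ := by
                simp only [Matrix.mul_assoc]
              rw [this, Matrix.nonsing_inv_mul _ hdet, Matrix.mul_one, Matrix.diagonal_mul_diagonal]
              simp only [pow_succ]
          rw [aeval_monomial, hpow, ← Algebra.smul_def]
          simp only [eval_monomial]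
          have : Matrix.diagonal (fun i => a * D i ^ k) = a • Matrix.diagonal (fun i => D i ^ k) := by
            rw [← Matrix.diagonal_smul]; rfl
          rw [this, Matrix.mul_smul, Matrix.smul_mul]
      rw [key]
      have : (fun i => (∏ μ ∈ Finset.univ.image D, (X - C μ)).eval (D i)) = fun _ => (0 : ℂ) := by
        funext i
        rw [eval_prod]
        exact Finset.prod_eq_zero (Finset.mem_image_of_mem D (Finset.mem_univ i)) (by simp)
      rw [this]
      simp
  · rintro ⟨p, hp, hA⟩
    have h0 : aeval (Matrix.toLinAlgEquiv' A) p = 0 := by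
      rw [aeval_algEquiv]
      simp [hA]
    have hs := Module.End.isSemisimple_of_squarefree_aeval_eq_zero hp h0
    have htop := hs.iSup_eigenspace_eq_top
    let S : Set (Fin m → ℂ) := {v | ∃ μ : ℂ, A.mulVec v = μ • v}
    have hS : ⊤ ≤ Submodule.span ℂ S := by
      rw [← htop]
      refine iSup_le fun μ v hv => Submodule.subset_span ⟨μ, ?_⟩
      have := Module.End.mem_eigenspace_iff.1 hv
      simpa using this
    let b0 := Module.Basis.ofSpan hS
    have hb0 : ∀ i, b0 i ∈ S := fun i => Module.Basis.ofSpan_subset hS ⟨i, rfl⟩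
    let e := b0.indexEquiv (Pi.basisFun ℂ (Fin m))
    let b := b0.reindex e
    have hb : ∀ i, b i ∈ S := fun i => by
      simp only [b, Module.Basis.reindex_apply]; exact hb0 _
    choose D hD using hb
    let U : Matrix (Fin m) (Fin m) ℂ := (Pi.basisFun ℂ (Fin m)).toMatrix b
    have hUa : ∀ i j, U i j = b j i := fun i j => by simp [U, Module.Basis.toMatrix_apply]
    have hU : IsUnit U := by
      have := (Pi.basisFun ℂ (Fin m)).invertibleToMatrix b
      exact isUnit_of_invertible _
    refine ⟨U, D, hU, ?_⟩
    have hdet : IsUnit U.det := (Matrix.isUnit_iff_isUnit_det U).1 hU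
    have : A * U = U * Matrix.diagonal D := by
      ext i j
      have := congrFun (hD j) i
      rw [Matrix.mul_diagonal, hUa, Matrix.mul_apply]
      simp only [hUa]
      simpa [Matrix.mulVec, dotProduct, mul_comm] using this
    rw [← this, Matrix.mul_assoc, Matrix.mul_nonsing_inv _ hdet, Matrix.mul_one]

/-- `M = ∑ αₖ • Rₖ` is diagonalizable over `ℂ` iff `ρ(M) = ∑ αₖ • Pₖ` is. -/
theorem intersection_matrices_diagonalizable (n d : ℕ)
    (R : Fin (d + 1) → Matrix (Fin n) (Fin n) ℂ)
    (c : Fin (d + 1) → Fin (d + 1) → Fin (d + 1) → ℂ)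
    (hind : LinearIndependent ℂ R)
    (hmul : ∀ k j, R k * R j = ∑ i, c k i j • R i)
    (hone : (1 : Matrix (Fin n) (Fin n) ℂ) ∈ Submodule.span ℂ (Set.range R))
    (P : Fin (d + 1) → Matrix (Fin (d + 1)) (Fin (d + 1)) ℂ)
    (hP : ∀ k i j, P k i j = c k i j)
    (α : Fin (d + 1) → ℂ) :
    (∃ (U : Matrix (Fin n) (Fin n) ℂ) (D : Fin n → ℂ),
        IsUnit U ∧ (∑ k, α k • R k) = U * Matrix.diagonal D * U⁻¹) ↔
    (∃ (V : Matrix (Fin (d + 1)) (Fin (d + 1)) ℂ) (D' : Fin (d + 1) → ℂ),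
        IsUnit V ∧ (∑ k, α k • P k) = V * Matrix.diagonal D' * V⁻¹) := by
  rw [diag_iff_aux, diag_iff_aux]
  set M := ∑ k, α k • R k with hM
  set N := ∑ k, α k • P k with hN
  let T : (Fin (d + 1) → ℂ) →ₗ[ℂ] Matrix (Fin n) (Fin n) ℂ := Fintype.linearCombination ℂ R
  have hT : ∀ v, T v = ∑ i, v i • R i := fun v => rfl
  have hinj : Function.Injective T := linearIndependent_iff_injective_fintypeLinearCombination.1 hind
  have h1 : ∀ v, T (N.mulVec v) = M * T v := by
    intro v
    rw [hT, hT, hM, Finset.sum_mul]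
    simp only [Finset.mul_sum, Matrix.smul_mul, Matrix.mul_smul, hmul, Finset.smul_sum, smul_smul]
    simp only [hN, Matrix.mulVec, dotProduct, Matrix.sum_apply, Matrix.smul_apply, hP,
      smul_eq_mul, Finset.sum_mul, Finset.sum_smul]
    have e1 : ∀ f : Fin (d + 1) → Fin (d + 1) → Fin (d + 1) → Matrix (Fin n) (Fin n) ℂ,
        ∑ i, ∑ j, ∑ k, f i j k = ∑ k, ∑ j, ∑ i, f i j k := by
      intro f
      rw [Finset.sum_comm]
      rw [Finset.sum_comm (s := Finset.univ) (f := fun k j => ∑ i, f i j k)]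
      exact Finset.sum_congr rfl fun j _ => Finset.sum_comm
    rw [e1]
    refine Finset.sum_congr rfl fun k _ => Finset.sum_congr rfl fun j _ =>
      Finset.sum_congr rfl fun i _ => ?_
    congr 1
    ring
  have h2 : ∀ (p : Polynomial ℂ) v, T ((Polynomial.aeval N p).mulVec v) = Polynomial.aeval M p * T v := by
    intro p
    induction p using Polynomial.induction_on with
    | C a => intro v; simp [Algebra.algebraMap_eq_smul_one, Matrix.smul_mulVec]
    | add p q hp hq => intro v; simp [Matrix.add_mulVec, Matrix.add_mul, hp, hq]
    | monomial k a ih =>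
      intro v
      rw [pow_succ, ← mul_assoc, map_mul (Polynomial.aeval N) _ Polynomial.X,
        map_mul (Polynomial.aeval M) _ Polynomial.X, Polynomial.aeval_X, Polynomial.aeval_X,
        ← Matrix.mulVec_mulVec, ih, h1, Matrix.mul_assoc]
  obtain ⟨v1, hv1⟩ : ∃ v, T v = 1 := by
    rw [← Fintype.range_linearCombination ℂ] at hone
    exact hone
  refine exists_congr fun p => and_congr_right fun _ => ⟨fun h => ?_, fun h => ?_⟩
  · have : ∀ v, (Polynomial.aeval N p).mulVec v = 0 := fun v => hinj (by rw [h2, h]; simp)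
    ext i j
    have := congrFun (this (Pi.single j 1)) i
    simpa using this
  · have := h2 p v1
    rw [h, hv1] at this
    simpa using this.symm
end

section
/- In the Johnson scheme J(N,2) with N ≥ 4, let α₁, α₂ be real numbers such that the three quantities λ₀ = 1 + 2(N−2)α₁ + ((N−2)(N−3)/2)α₂, λ₁ = 1 + (N−4)α₁ − (N−3)α₂, and λ₂ = 1 − 2α₁ + α₂ are all nonnegative. Then there exist real numbers β₀, β₁, β₂ such that the matrix S = β₀ • R0 + β₁ • R1 + β₂ • R2 is positive semidefinite and satisfies S² = R0 + α₁ • R1 + α₂ • R2; i.e., the positive semidefinite square root of the covariance matrix lies in the span of R0, R1, R2. -/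
/-- Edges of the complete undirected graph on `N` vertices: 2-element subsets of `Fin N`. -/
abbrev JohnsonEdge (N : ℕ) := {s : Finset (Fin N) // s.card = 2}

/-- Adjacency matrix of the `k`-th relation of the Johnson scheme `J(N,2)`:
entry 1 iff the two edges share exactly `2 - k` vertices. -/
def JohnsonR (N k : ℕ) : Matrix (JohnsonEdge N) (JohnsonEdge N) ℝ :=
  fun x y => if (x.1 ∩ y.1).card = 2 - k then 1 else 0

open Matrix in
/-- incidence matrix -/
def JB (N : ℕ) : Matrix (JohnsonEdge N) (Fin N) ℝ := fun x v => if v ∈ x.1 then 1 else 0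

/-- all-ones matrix -/
def JJ (N : ℕ) : Matrix (JohnsonEdge N) (JohnsonEdge N) ℝ := fun _ _ => 1

lemma JB_row (N : ℕ) (x : JohnsonEdge N) : ∑ v, JB N x v = 2 := by
  simp [JB, x.2]

lemma JB_off (N : ℕ) (u v : Fin N) (h : u ≠ v) : ∑ x, JB N x u * JB N x v = 1 := by
  rw [Finset.sum_eq_single (⟨{u, v}, Finset.card_pair h⟩ : JohnsonEdge N)]
  · simp [JB]
  · intro x _ hx
    by_contra hc
    apply hx
    have hu : u ∈ x.1 := by
      by_contra h'; apply hc; simp [JB, h']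
    have hv : v ∈ x.1 := by
      by_contra h'; apply hc; simp [JB, h']
    apply Subtype.ext
    symm
    apply Finset.eq_of_subset_of_card_le
    · intro w hw
      simp only [Finset.mem_insert, Finset.mem_singleton] at hw
      rcases hw with rfl | rfl <;> assumption
    · rw [x.2, Finset.card_pair h]
  · simp

lemma JB_sq (N : ℕ) (x : JohnsonEdge N) (u : Fin N) : JB N x u * JB N x u = JB N x u := by
  simp [JB]

lemma JB_col (N : ℕ) (u : Fin N) : ∑ x, JB N x u = (N : ℝ) - 1 := by
  have h1 : ∑ v, ∑ x, JB N x u * JB N x v = 2 * ∑ x, JB N x u := by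
    rw [Finset.sum_comm]
    simp_rw [← Finset.mul_sum, JB_row]
    rw [← Finset.sum_mul, mul_comm]
  have h2 : ∑ v, ∑ x, JB N x u * JB N x v = ∑ x, JB N x u + ((N : ℝ) - 1) := by
    rw [← Finset.add_sum_erase _ _ (Finset.mem_univ u)]
    simp_rw [JB_sq]
    congr 1
    rw [Finset.sum_congr rfl (fun v hv => JB_off N u v (Finset.ne_of_mem_erase hv).symm)]
    have : 1 ≤ N := by have := u.2; omega
    simp [Finset.card_erase_of_mem, Nat.cast_sub this]
  linarith

lemma J_card (N : ℕ) : (Fintype.card (JohnsonEdge N) : ℝ) = (N : ℝ) * (N - 1) / 2 := by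
  have : ∑ x : JohnsonEdge N, ∑ v : Fin N, JB N x v = (N : ℝ) * (N - 1) := by
    refine Finset.sum_comm.trans ?_
    simp_rw [JB_col]; simp; ring
  simp_rw [JB_row] at this
  simp only [Finset.sum_const, nsmul_eq_mul, Finset.card_univ] at this
  linarith

open Matrix in
lemma JB_tmul (N : ℕ) : (JB N)ᵀ * JB N = ((N : ℝ) - 2) • 1 + Matrix.of (fun _ _ => (1:ℝ)) := by
  ext u v
  simp only [Matrix.mul_apply, Matrix.transpose_apply, Matrix.add_apply, Matrix.smul_apply, Matrix.of_apply, smul_eq_mul, Matrix.one_apply]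
  by_cases h : u = v
  · subst h
    simp_rw [JB_sq, JB_col]; simp; ring
  · rw [JB_off N u v h]; simp [h]

/-- Gram matrix -/
def JM (N : ℕ) : Matrix (JohnsonEdge N) (JohnsonEdge N) ℝ := JB N * (JB N).transpose

lemma JMM (N : ℕ) : JM N * JM N = ((N : ℝ) - 2) • JM N + (4 : ℝ) • JJ N := by
  have : JM N * JM N = JB N * ((JB N).transpose * JB N) * (JB N).transpose := by
    simp only [JM, Matrix.mul_assoc]
  rw [this, JB_tmul, Matrix.mul_add, Matrix.add_mul, Matrix.mul_smul, Matrix.mul_one, Matrix.smul_mul]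
  congr 1
  ext x y
  simp only [Matrix.mul_apply, Matrix.of_apply, mul_one, Matrix.transpose_apply, JB_row, ← Finset.mul_sum, Matrix.smul_apply, JJ, smul_eq_mul]
  norm_num

lemma JM_symm (N : ℕ) : (JM N).transpose = JM N := by
  simp [JM]

lemma JJ_symm (N : ℕ) : (JJ N).transpose = JJ N := rfl

lemma JMJ (N : ℕ) : JM N * JJ N = (2 * ((N : ℝ) - 1)) • JJ N := by
  ext x y
  simp only [JM, JJ, Matrix.mul_apply, Matrix.transpose_apply, Matrix.smul_apply, smul_eq_mul, mul_one]
  rw [Finset.sum_comm]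
  simp_rw [← Finset.mul_sum, JB_col]
  rw [← Finset.sum_mul, JB_row]

lemma JJM (N : ℕ) : JJ N * JM N = (2 * ((N : ℝ) - 1)) • JJ N := by
  have := congrArg Matrix.transpose (JMJ N)
  rwa [Matrix.transpose_mul, Matrix.transpose_smul, JM_symm, JJ_symm] at this

lemma JJJ (N : ℕ) : JJ N * JJ N = ((N : ℝ) * (N - 1) / 2) • JJ N := by
  ext x y
  rw [← J_card]
  simp [JJ, Matrix.mul_apply]

lemma JM_apply (N : ℕ) (x y : JohnsonEdge N) : JM N x y = ((x.1 ∩ y.1).card : ℝ) := by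
  simp only [JM, JB, Matrix.mul_apply, Matrix.transpose_apply]
  simp only [← ite_and, mul_ite, mul_one, mul_zero, ← Finset.mem_inter]
  simp only [Finset.sum_boole, Finset.mem_inter]
  congr 2
  ext v
  simp [and_comm]

lemma R0_eq (N : ℕ) : JohnsonR N 0 = 1 := by
  ext x y
  simp only [JohnsonR, Matrix.one_apply]
  congr 1
  apply propext
  constructor
  · intro h
    have h1 := Finset.eq_of_subset_of_card_le (Finset.inter_subset_left : x.1 ∩ y.1 ⊆ x.1) (by rw [h, x.2])
    have h2 := Finset.eq_of_subset_of_card_le (Finset.inter_subset_right : x.1 ∩ y.1 ⊆ y.1) (by rw [h, y.2])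
    exact Subtype.ext (h1.symm.trans h2)
  · rintro rfl; simp [x.2]

lemma inter_card_le (N : ℕ) (x y : JohnsonEdge N) : (x.1 ∩ y.1).card ≤ 2 :=
  (Finset.card_le_card Finset.inter_subset_left).trans x.2.le

lemma JM_eq (N : ℕ) : JM N = (2 : ℝ) • JohnsonR N 0 + JohnsonR N 1 := by
  ext x y
  rw [JM_apply]
  have := inter_card_le N x y
  simp only [JohnsonR, Matrix.add_apply, Matrix.smul_apply]
  interval_cases (x.1 ∩ y.1).card <;> simp

lemma JJ_eq (N : ℕ) : JJ N = JohnsonR N 0 + JohnsonR N 1 + JohnsonR N 2 := by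
  ext x y
  have := inter_card_le N x y
  simp only [JohnsonR, JJ, Matrix.add_apply]
  interval_cases (x.1 ∩ y.1).card <;> simp

/-- the c coefficient -/
noncomputable def Jc (N : ℕ) (l0 l1 l2 : ℝ) : ℝ :=
  2 * (l0 - l2) / (N * (N - 1)) - 4 * (l1 - l2) / (N * (N - 2))

/-- element with given eigenvalues -/
noncomputable def JF (N : ℕ) (l0 l1 l2 : ℝ) : Matrix (JohnsonEdge N) (JohnsonEdge N) ℝ :=
  l2 • (1 : Matrix (JohnsonEdge N) (JohnsonEdge N) ℝ) + ((l1 - l2) / ((N : ℝ) - 2)) • JM N + Jc N l0 l1 l2 • JJ N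

lemma JF_mul (N : ℕ) (hN : 4 ≤ N) (a b c : ℝ) :
    JF N a b c * JF N a b c = JF N (a * a) (b * b) (c * c) := by
  have hN' : (4 : ℝ) ≤ N := by exact_mod_cast hN
  have e0 : (N : ℝ) ≠ 0 := by linarith
  have e1 : (N : ℝ) - 1 ≠ 0 := by linarith
  have e2 : (N : ℝ) - 2 ≠ 0 := by linarith
  simp only [JF, Matrix.add_mul, Matrix.mul_add, Matrix.smul_mul, Matrix.mul_smul, Matrix.one_mul,
    Matrix.mul_one, JMM, JMJ, JJM, JJJ]
  simp only [Jc]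
  match_scalars <;> field_simp <;> ring

lemma JF_symm (N : ℕ) (a b c : ℝ) : (JF N a b c).transpose = JF N a b c := by
  simp [JF, JM_symm, JJ_symm]

lemma JF_sqrt (N : ℕ) (hN : 4 ≤ N) (a b c : ℝ) (ha : 0 ≤ a) (hb : 0 ≤ b) (hc : 0 ≤ c) :
    JF N √a √b √c * JF N √a √b √c = JF N a b c := by
  rw [JF_mul N hN, Real.mul_self_sqrt ha, Real.mul_self_sqrt hb, Real.mul_self_sqrt hc]

lemma JF_psd (N : ℕ) (hN : 4 ≤ N) (a b c : ℝ) (ha : 0 ≤ a) (hb : 0 ≤ b) (hc : 0 ≤ c) :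
    (JF N a b c).PosSemidef := by
  have h := Matrix.posSemidef_conjTranspose_mul_self (JF N √a √b √c)
  rwa [Matrix.conjTranspose_eq_transpose_of_trivial, JF_symm, JF_sqrt N hN a b c ha hb hc] at h

lemma JF_eq (N : ℕ) (a b c : ℝ) : JF N a b c =
    (c + 2 * ((b - c) / ((N : ℝ) - 2)) + Jc N a b c) • JohnsonR N 0 +
    ((b - c) / ((N : ℝ) - 2) + Jc N a b c) • JohnsonR N 1 + Jc N a b c • JohnsonR N 2 := by
  rw [JF, JM_eq, JJ_eq, ← R0_eq]
  module

/-- if `λ₀, λ₁, λ₂ ≥ 0` then the positive semidefinite square root of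
`Σ = R0 + α₁ • R1 + α₂ • R2` lies in the span of `R0, R1, R2`. -/
theorem johnson_psd_sqrt_in_algebra (N : ℕ) (hN : 4 ≤ N) (α₁ α₂ : ℝ)
    (h0 : 0 ≤ 1 + 2 * ((N : ℝ) - 2) * α₁ + ((N : ℝ) - 2) * ((N : ℝ) - 3) / 2 * α₂)
    (h1 : 0 ≤ 1 + ((N : ℝ) - 4) * α₁ - ((N : ℝ) - 3) * α₂)
    (h2 : 0 ≤ 1 - 2 * α₁ + α₂) :
    ∃ β₀ β₁ β₂ : ℝ,
      (β₀ • JohnsonR N 0 + β₁ • JohnsonR N 1 + β₂ • JohnsonR N 2).PosSemidef ∧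
      (β₀ • JohnsonR N 0 + β₁ • JohnsonR N 1 + β₂ • JohnsonR N 2) ^ 2 =
        JohnsonR N 0 + α₁ • JohnsonR N 1 + α₂ • JohnsonR N 2 := by
  have hN' : (4 : ℝ) ≤ N := by exact_mod_cast hN
  have e0 : (N : ℝ) ≠ 0 := by linarith
  have e1 : (N : ℝ) - 1 ≠ 0 := by linarith
  have e2 : (N : ℝ) - 2 ≠ 0 := by linarith
  have hs := JF_sqrt N hN _ _ _ h0 h1 h2
  have hp := JF_psd N hN _ _ _ (Real.sqrt_nonneg (1 + 2 * ((N : ℝ) - 2) * α₁ + ((N : ℝ) - 2) * ((N : ℝ) - 3) / 2 * α₂))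
    (Real.sqrt_nonneg (1 + ((N : ℝ) - 4) * α₁ - ((N : ℝ) - 3) * α₂)) (Real.sqrt_nonneg (1 - 2 * α₁ + α₂))
  rw [← pow_two] at hs
  rw [JF_eq] at hp
  rw [JF_eq, JF_eq] at hs
  refine ⟨_, _, _, hp, hs.trans ?_⟩
  simp only [Jc]
  match_scalars <;> field_simp <;> ring
end

section
/- In the Nykamp–Zhao configuration on the complete directed graph with N ≥ 4 vertices, the relation matrices satisfy the matrix identity Rconv * Rdisj = (N−3) • Ranti + (N−3) • Rdiv + (N−4) • Rdisj. -/
/-- Edges of the complete directed graph on `N` vertices. -/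
abbrev DEdge (N : ℕ) := {p : Fin N × Fin N // p.1 ≠ p.2}

/-- Identity relation: `x = y`. -/
def Rid (N : ℕ) : Matrix (DEdge N) (DEdge N) ℝ :=
  fun x y => if x = y then 1 else 0

/-- Reciprocal relation: `y₁ = x₂` and `y₂ = x₁`. -/
def Rrecip (N : ℕ) : Matrix (DEdge N) (DEdge N) ℝ :=
  fun x y => if y.1.1 = x.1.2 ∧ y.1.2 = x.1.1 then 1 else 0

/-- Convergent relation: `x₂ = y₂` and `x₁ ≠ y₁`. -/
def Rconv (N : ℕ) : Matrix (DEdge N) (DEdge N) ℝ :=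
  fun x y => if x.1.2 = y.1.2 ∧ x.1.1 ≠ y.1.1 then 1 else 0

/-- Divergent relation: `x₁ = y₁` and `x₂ ≠ y₂`. -/
def Rdiv (N : ℕ) : Matrix (DEdge N) (DEdge N) ℝ :=
  fun x y => if x.1.1 = y.1.1 ∧ x.1.2 ≠ y.1.2 then 1 else 0

/-- Chain relation: `x₂ = y₁` and `x₁ ≠ y₂`. -/
def Rchain (N : ℕ) : Matrix (DEdge N) (DEdge N) ℝ :=
  fun x y => if x.1.2 = y.1.1 ∧ x.1.1 ≠ y.1.2 then 1 else 0

/-- Anti-chain relation: `x₁ = y₂` and `x₂ ≠ y₁`. -/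
def Ranti (N : ℕ) : Matrix (DEdge N) (DEdge N) ℝ :=
  fun x y => if x.1.1 = y.1.2 ∧ x.1.2 ≠ y.1.1 then 1 else 0

/-- Disjoint relation: `{x₁, x₂} ∩ {y₁, y₂} = ∅`. -/
def Rdisj (N : ℕ) : Matrix (DEdge N) (DEdge N) ℝ :=
  fun x y =>
    if ({x.1.1, x.1.2} : Finset (Fin N)) ∩ {y.1.1, y.1.2} = ∅ then 1 else 0

/-- `Rconv * Rdisj = (N−3) • Ranti + (N−3) • Rdiv + (N−4) • Rdisj`. -/
theorem nykampZhao_conv_mul_disj (N : ℕ) (hN : 4 ≤ N) :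
    Rconv N * Rdisj N =
      ((N : ℝ) - 3) • Ranti N + ((N : ℝ) - 3) • Rdiv N + ((N : ℝ) - 4) • Rdisj N := by
  ext ⟨⟨a, b⟩, hab⟩ ⟨⟨c, d⟩, hcd⟩
  have hdis : ∀ p q r s : Fin N, (({p, q} : Finset (Fin N)) ∩ {r, s} = ∅) ↔
      (p ≠ r ∧ p ≠ s ∧ q ≠ r ∧ q ≠ s) := by
    intro p q r s
    rw [← Finset.disjoint_iff_inter_eq_empty]
    simp only [Finset.disjoint_insert_left, Finset.disjoint_singleton_left,
      Finset.mem_insert, Finset.mem_singleton]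
    tauto
  simp only at hab hcd
  simp only [Matrix.mul_apply, Matrix.add_apply, Matrix.smul_apply, Rconv, Rdisj, Ranti, Rdiv,
    hdis, smul_eq_mul, ← ite_and, ite_mul, one_mul, zero_mul, mul_ite, mul_one, mul_zero]
  rw [Finset.sum_boole]
  by_cases hb : b = c ∨ b = d
  · rw [Finset.filter_false_of_mem]
    · rcases hb with rfl | rfl
      · simp [hab, hcd]
      · simp [hab, hcd]
    · rintro ⟨⟨k, l⟩, hkl⟩ -
      simp only
      rintro ⟨⟨h2, h3, h4, h5⟩, rfl, h1⟩
      tauto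
  · have hbc : b ≠ c := fun h => hb (Or.inl h)
    have hbd : b ≠ d := fun h => hb (Or.inr h)
    have hcard : (Finset.univ.filter (fun z : DEdge N => (z.1.1 ≠ c ∧ z.1.1 ≠ d ∧
        z.1.2 ≠ c ∧ z.1.2 ≠ d) ∧ b = z.1.2 ∧ a ≠ z.1.1)).card
        = (({a, b, c, d} : Finset (Fin N))ᶜ).card := by
      refine Finset.card_bij (fun z _ => z.1.1) ?_ ?_ ?_
      · rintro ⟨⟨k, l⟩, hkl⟩ hz
        simp only [Finset.mem_filter, Finset.mem_univ, true_and] at hz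
        simp only [Finset.mem_compl, Finset.mem_insert, Finset.mem_singleton]
        grind
      · rintro ⟨⟨k, l⟩, hkl⟩ hz ⟨⟨k', l'⟩, hkl'⟩ hz' h
        simp only [Finset.mem_filter, Finset.mem_univ, true_and] at hz hz'
        grind
      · intro k hk
        simp only [Finset.mem_compl, Finset.mem_insert, Finset.mem_singleton, not_or] at hk
        refine ⟨⟨(k, b), hk.2.1⟩, ?_, rfl⟩
        simp only [Finset.mem_filter, Finset.mem_univ, true_and]
        grind
    rw [hcard, Finset.card_compl, Fintype.card_fin]
    by_cases hac : a = c
    · subst hac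
      have h3 : ({a, b, a, d} : Finset (Fin N)).card = 3 := by
        rw [Finset.insert_eq_of_mem (by simp)]
        exact Finset.card_eq_three.2 ⟨b, a, d, hbc, hbd, hcd, rfl⟩
      rw [h3, Nat.cast_sub (by omega)]
      simp [hcd, hbd]
    · by_cases had : a = d
      · subst had
        have h3 : ({a, b, c, a} : Finset (Fin N)).card = 3 := by
          rw [Finset.insert_eq_of_mem (by simp)]
          exact Finset.card_eq_three.2 ⟨b, c, a, hbc, hbd, hcd, rfl⟩
        rw [h3, Nat.cast_sub (by omega)]
        simp [hac, hbc]
      · have h4 : ({a, b, c, d} : Finset (Fin N)).card = 4 := by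
          rw [Finset.card_insert_of_notMem (by simp [hab, hac, had])]
          rw [Finset.card_eq_three.2 ⟨b, c, d, hbc, hbd, hcd, rfl⟩]
        rw [h4, Nat.cast_sub (by omega)]
        simp [hac, had, hbc, hbd]
end

section
/- In the Nykamp–Zhao configuration on the complete directed graph with N ≥ 4 vertices, the relation matrices satisfy the matrix identity Rchain * Ranti = (N−2) • Rid + (N−3) • Rconv. -/
/-- `Rchain * Ranti = (N−2) • Rid + (N−3) • Rconv`. -/
theorem nykampZhao_chain_mul_anti (N : ℕ) (hN : 4 ≤ N) :
    Rchain N * Ranti N = ((N : ℝ) - 2) • Rid N + ((N : ℝ) - 3) • Rconv N := by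
  classical
  ext x y
  obtain ⟨⟨a, b⟩, hab⟩ := x
  obtain ⟨⟨c, d⟩, hcd⟩ := y
  simp only [ne_eq] at hab hcd
  have key : (Rchain N * Ranti N) ⟨(a, b), hab⟩ ⟨(c, d), hcd⟩
      = if b = d then (((Finset.univ \ {a, b, c} : Finset (Fin N)).card : ℕ) : ℝ) else 0 := by
    rw [Matrix.mul_apply]
    have h1 : ∀ z : DEdge N, Rchain N ⟨(a, b), hab⟩ z * Ranti N z ⟨(c, d), hcd⟩
        = (fun p : Fin N × Fin N =>
            if b = p.1 ∧ b = d ∧ p.2 ∉ ({a, b, c} : Finset (Fin N)) then (1 : ℝ) else 0) z.1 := by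
      rintro ⟨⟨e, f⟩, hef⟩
      simp only [Rchain, Ranti, Finset.mem_insert, Finset.mem_singleton]
      simp only [ne_eq] at hef ⊢
      split_ifs <;> grind
    rw [Finset.sum_congr rfl (fun z _ => h1 z)]
    rw [← Finset.sum_subtype (Finset.univ.filter (fun p : Fin N × Fin N => p.1 ≠ p.2)) (by simp)
      (fun p : Fin N × Fin N =>
            if b = p.1 ∧ b = d ∧ p.2 ∉ ({a, b, c} : Finset (Fin N)) then (1 : ℝ) else 0)]
    by_cases hbd : b = d
    · rw [if_pos hbd, Finset.sum_boole, Finset.filter_filter]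
      congr 1
      symm
      apply Finset.card_bij (fun f _ => (b, f))
      · intro f hf
        simp at hf ⊢
        grind
      · intro f _ g _ h
        simpa using h
      · rintro ⟨e, f⟩ h
        simp at h
        exact ⟨f, by simp; grind, by simp; grind⟩
    · simp [hbd]
  rw [key]
  simp only [Matrix.add_apply, Matrix.smul_apply, Rid, Rconv, smul_eq_mul, Subtype.mk.injEq,
    Prod.mk.injEq]
  by_cases hbd : b = d
  · subst hbd
    have hc : (Finset.univ \ {a, b, c} : Finset (Fin N)).card + ({a, b, c} : Finset (Fin N)).card
        = N := by
      rw [Finset.card_sdiff_add_card_eq_card (Finset.subset_univ _)]; simp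
    have hc' : (((Finset.univ \ {a, b, c} : Finset (Fin N)).card : ℕ) : ℝ)
        = N - (({a, b, c} : Finset (Fin N)).card : ℕ) := by
      rw [eq_sub_iff_add_eq]; exact_mod_cast hc
    by_cases hac : a = c
    · subst hac
      have : ({a, b, a} : Finset (Fin N)).card = 2 := by
        rw [show ({a, b, a} : Finset (Fin N)) = {a, b} by ext; simp; tauto]
        exact Finset.card_pair hab
      rw [this] at hc'
      rw [if_pos rfl, hc']
      simp
    · have : ({a, b, c} : Finset (Fin N)).card = 3 :=
        Finset.card_eq_three.mpr ⟨a, b, c, hab, hac, fun h => hcd h.symm, rfl⟩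
      rw [this] at hc'
      rw [if_pos rfl, hc']
      simp [hac]
  · simp [hbd]
end

section
/- In the Nykamp–Zhao configuration on the complete directed graph with N ≥ 5 vertices, fix real numbers αrecip, αconv, αchain, αdiv, αdisj and let Σ = Rid + αrecip • Rrecip + αconv • Rconv + αchain • (Rchain + Ranti) + αdiv • Rdiv + αdisj • Rdisj. Set τ = √(N(N−2)(αconv − αdiv)² + (αconv + αdiv − 2(N−3)(αchain − αdisj) − 2αrecip)²). Then every (real) eigenvalue of the symmetric matrix Σ lies in the five-element set {λ₁, λ₂, λ₃, λ₄, λ₅}, where λ₁ = 1 + αrecip + (N−2)αconv + 2(N−2)αchain + (N−2)αdiv + (N−2)(N−3)αdisj; λ₂ = 1 − αrecip − αconv + 2αchain − αdiv; λ₃ = 1 + αrecip − αconv − 2αchain − αdiv + 2αdisj; and λ₄, λ₅ = 1 + ((N−3)/2)αconv − αchain + ((N−3)/2)αdiv − (N−3)αdisj ± τ/2. -/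
def ext0 {N : ℕ} (v : DEdge N → ℝ) (a b : Fin N) : ℝ :=
  if h : a ≠ b then v ⟨(a, b), h⟩ else 0

lemma ext0_self {N : ℕ} (v : DEdge N → ℝ) (a : Fin N) : ext0 v a a = 0 := by
  simp [ext0]

lemma sum_edge {N : ℕ} (v : DEdge N → ℝ) (G : Fin N → Fin N → ℝ) :
    ∑ y : DEdge N, G y.1.1 y.1.2 * v y = ∑ i, ∑ j, G i j * ext0 v i j := by
  rw [← Fintype.sum_prod_type' (f := fun i j => G i j * ext0 v i j)]
  have h : ∀ p : Fin N × Fin N, G p.1 p.2 * ext0 v p.1 p.2 =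
      if h : p.1 ≠ p.2 then G p.1 p.2 * v ⟨p, h⟩ else 0 := by
    intro p
    unfold ext0
    split_ifs <;> simp
  simp only [h]
  rw [← Finset.sum_filter_add_sum_filter_not Finset.univ (fun p : Fin N × Fin N => p.1 ≠ p.2)]
  rw [Finset.sum_eq_zero (s := Finset.univ.filter (fun p : Fin N × Fin N => ¬ p.1 ≠ p.2)), add_zero]
  · rw [Finset.sum_subtype (p := fun p : Fin N × Fin N => p.1 ≠ p.2) _ (by simp)]
    refine Finset.sum_congr rfl fun y _ => ?_
    rw [dif_pos y.2]
  · intro p hp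
    rw [dif_neg (Finset.mem_filter.mp hp).2]

def entG {N : ℕ} (r cv ch dv dj : ℝ) (a b i j : Fin N) : ℝ :=
  (1 - cv - dv + dj) * ((if a = i then 1 else 0) * (if b = j then 1 else 0))
  + (r - 2 * ch + dj) * ((if b = i then 1 else 0) * (if a = j then 1 else 0))
  + cv * (if b = j then 1 else 0) + dv * (if a = i then 1 else 0)
  + ch * ((if b = i then 1 else 0) + (if a = j then 1 else 0))
  + dj * (1 - (if a = i then 1 else 0) - (if a = j then 1 else 0)
    - (if b = i then 1 else 0) - (if b = j then 1 else 0))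

lemma ent_eq {N : ℕ} (r cv ch dv dj : ℝ) (x y : DEdge N) :
    (Rid N + r • Rrecip N + cv • Rconv N + ch • (Rchain N + Ranti N) +
          dv • Rdiv N + dj • Rdisj N) x y = entG r cv ch dv dj x.1.1 x.1.2 y.1.1 y.1.2 := by
  obtain ⟨⟨a, b⟩, hx⟩ := x
  obtain ⟨⟨i, j⟩, hy⟩ := y
  have hd : (({a, b} : Finset (Fin N)) ∩ {i, j} = ∅) ↔ (a ≠ i ∧ a ≠ j ∧ b ≠ i ∧ b ≠ j) := by
    rw [← Finset.disjoint_iff_inter_eq_empty]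
    simp [not_or, and_assoc]
    tauto
  simp only [ne_eq] at hx hy
  have hy' : ¬ j = i := fun h => hy h.symm
  simp only [Matrix.add_apply, Matrix.smul_apply, smul_eq_mul, Rid, Rrecip, Rconv, Rchain,
    Ranti, Rdiv, Rdisj, entG, hd, Subtype.mk.injEq, Prod.mk.injEq, eq_comm (a := i), eq_comm (a := j)]
  by_cases h1 : a = i <;> by_cases h2 : b = j <;> by_cases h3 : a = j <;> by_cases h4 : b = i <;>
    first
    | (exfalso; subst_vars; simp_all; done)
    | (simp [h1, h2, h3, h4, hy, hy']; done)
    | (simp [h1, h2, h3, h4, hy, hy']; ring)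

lemma row_eq {N : ℕ} (r cv ch dv dj : ℝ) (f : Fin N → Fin N → ℝ) (a b : Fin N) :
    ∑ i, ∑ j, entG r cv ch dv dj a b i j * f i j =
     (1 - cv - dv + dj) * f a b + (r - 2 * ch + dj) * f b a
     + cv * (∑ i, f i b) + dv * (∑ j, f a j) + ch * ((∑ j, f b j) + ∑ i, f i a)
     + dj * ((∑ i, ∑ j, f i j) - (∑ j, f a j) - (∑ i, f i a) - (∑ j, f b j) - ∑ i, f i b) := by
  simp only [entG, add_mul, sub_mul, mul_add, mul_sub, Finset.sum_add_distrib,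
    Finset.sum_sub_distrib, mul_assoc, ← Finset.mul_sum, ite_mul, one_mul, zero_mul, mul_ite,
    mul_one, mul_zero, Finset.sum_ite_eq, Finset.sum_ite_irrel, Finset.sum_const_zero, Finset.mem_univ, if_true]
  try ring

/-- every real eigenvalue of the Nykamp–Zhao covariance matrix
`Σ = Rid + αrecip • Rrecip + αconv • Rconv + αchain • (Rchain + Ranti) + αdiv • Rdiv
+ αdisj • Rdisj` lies in the five-element set `{λ₁, λ₂, λ₃, λ₄, λ₅}`. -/
theorem nykampZhao_spectrum_subset (N : ℕ) (hN : 5 ≤ N)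
    (αrecip αconv αchain αdiv αdisj : ℝ) :
    spectrum ℝ
        (Rid N + αrecip • Rrecip N + αconv • Rconv N + αchain • (Rchain N + Ranti N) +
          αdiv • Rdiv N + αdisj • Rdisj N) ⊆
      ({1 + αrecip + ((N : ℝ) - 2) * αconv + 2 * ((N : ℝ) - 2) * αchain +
          ((N : ℝ) - 2) * αdiv + ((N : ℝ) - 2) * ((N : ℝ) - 3) * αdisj,
        1 - αrecip - αconv + 2 * αchain - αdiv,
        1 + αrecip - αconv - 2 * αchain - αdiv + 2 * αdisj,
        1 + (((N : ℝ) - 3) / 2) * αconv - αchain + (((N : ℝ) - 3) / 2) * αdiv -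
          ((N : ℝ) - 3) * αdisj +
          Real.sqrt ((N : ℝ) * ((N : ℝ) - 2) * (αconv - αdiv) ^ 2 +
            (αconv + αdiv - 2 * ((N : ℝ) - 3) * (αchain - αdisj) - 2 * αrecip) ^ 2) / 2,
        1 + (((N : ℝ) - 3) / 2) * αconv - αchain + (((N : ℝ) - 3) / 2) * αdiv -
          ((N : ℝ) - 3) * αdisj -
          Real.sqrt ((N : ℝ) * ((N : ℝ) - 2) * (αconv - αdiv) ^ 2 +
            (αconv + αdiv - 2 * ((N : ℝ) - 3) * (αchain - αdisj) - 2 * αrecip) ^ 2) / 2} :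
        Set ℝ) := by
  intro μ hμ
  obtain ⟨v, hv0, hv⟩ : ∃ v : DEdge N → ℝ, v ≠ 0 ∧
      (Rid N + αrecip • Rrecip N + αconv • Rconv N + αchain • (Rchain N + Ranti N) +
          αdiv • Rdiv N + αdisj • Rdisj N).mulVec v = μ • v := by
    rw [← Matrix.spectrum_toLin', ← Module.End.hasEigenvalue_iff_mem_spectrum] at hμ
    obtain ⟨v, hv⟩ := hμ.exists_hasEigenvector
    exact ⟨v, hv.2, by rw [← Matrix.toLin'_apply]; exact hv.apply_eq_smul⟩
  generalize hf : ext0 v = f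
  have fs : ∀ a, f a a = 0 := fun a => by rw [← hf, ext0_self]
  obtain ⟨R, hR⟩ : ∃ R : Fin N → ℝ, ∀ a, ∑ j, f a j = R a := ⟨_, fun _ => rfl⟩
  obtain ⟨C, hC⟩ : ∃ C : Fin N → ℝ, ∀ a, ∑ i, f i a = C a := ⟨_, fun _ => rfl⟩
  obtain ⟨T, hT⟩ : ∃ T : ℝ, ∑ i, ∑ j, f i j = T := ⟨_, rfl⟩
  have hTR : ∑ a, R a = T := by rw [← hT]; simp only [hR]
  have hTC : ∑ a, C a = T := by rw [← hT, Finset.sum_comm]; simp only [hC]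
  have key : ∀ a b, a ≠ b → μ * f a b = (1 - αconv - αdiv + αdisj) * f a b
      + (αrecip - 2 * αchain + αdisj) * f b a
      + αconv * C b + αdiv * R a + αchain * (R b + C a)
      + αdisj * (T - R a - C a - R b - C b) := by
    intro a b hab
    have h1 := congrFun hv ⟨(a, b), hab⟩
    simp only [Matrix.mulVec, dotProduct, ent_eq, Pi.smul_apply, smul_eq_mul] at h1
    rw [sum_edge v (fun i j => entG αrecip αconv αchain αdiv αdisj a b i j), row_eq, hf] at h1
    simp only [hR, hC, hTR] at h1
    rw [h1, ← hf, ext0, dif_pos hab]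
  have key2 : ∀ a b, μ * f a b = (1 - αconv - αdiv + αdisj) * f a b
      + (αrecip - 2 * αchain + αdisj) * f b a
      + αconv * C b + αdiv * R a + αchain * (R b + C a)
      + αdisj * (T - R a - C a - R b - C b) - if a = b then (αconv * C a + αdiv * R a
        + αchain * (R a + C a) + αdisj * (T - R a - C a - R a - C a)) else 0 := by
    intro a b
    by_cases hab : a = b
    · subst hab
      simp only [fs, if_true]; ring
    · rw [if_neg hab, key a b hab]; ring
  have eR : ∀ a, μ * R a = (1 - αconv - αdiv + αdisj) * R a + (αrecip - 2 * αchain + αdisj) * C a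
      + αconv * (T - C a) + ((N : ℝ) - 1) * αdiv * R a + αchain * (T - R a + ((N : ℝ) - 1) * C a)
      + αdisj * (((N : ℝ) - 1) * (T - R a - C a) - (2 * T - R a - C a)) := by
    intro a
    have h := Finset.sum_congr (rfl : (Finset.univ : Finset (Fin N)) = _) (fun b _ => key2 a b)
    simp only [Finset.sum_add_distrib, Finset.sum_sub_distrib, ← Finset.mul_sum, Finset.sum_ite_eq,
      Finset.mem_univ, if_true, hR, hC, hTR, hTC, Finset.sum_const, Finset.card_univ,
      Fintype.card_fin, nsmul_eq_mul] at h
    rw [h]; ring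
  have eC : ∀ b, μ * C b = (1 - αconv - αdiv + αdisj) * C b + (αrecip - 2 * αchain + αdisj) * R b
      + ((N : ℝ) - 1) * αconv * C b + αdiv * (T - R b) + αchain * (T - C b + ((N : ℝ) - 1) * R b)
      + αdisj * (((N : ℝ) - 1) * (T - R b - C b) - (2 * T - R b - C b)) := by
    intro b
    have h := Finset.sum_congr (rfl : (Finset.univ : Finset (Fin N)) = _) (fun a _ => key2 a b)
    simp only [Finset.sum_add_distrib, Finset.sum_sub_distrib, ← Finset.mul_sum, Finset.sum_ite_eq',
      Finset.mem_univ, if_true, hR, hC, hTR, hTC, Finset.sum_const, Finset.card_univ,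
      Fintype.card_fin, nsmul_eq_mul] at h
    rw [h]; ring
  have eT := Finset.sum_congr (rfl : (Finset.univ : Finset (Fin N)) = _) (fun a _ => eR a)
  simp only [Finset.sum_add_distrib, Finset.sum_sub_distrib, ← Finset.mul_sum,
      hTR, hTC, Finset.sum_const, Finset.card_univ,
      Fintype.card_fin, nsmul_eq_mul] at eT
  simp only [Set.mem_insert_iff, Set.mem_singleton_iff]
  by_cases hT0 : T = 0
  swap
  · left
    apply mul_right_cancel₀ hT0
    rw [eT]; ring
  right
  subst hT0
  by_cases hRC : ∀ a, R a = 0 ∧ C a = 0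
  · have key3 : ∀ a b, a ≠ b → μ * f a b = (1 - αconv - αdiv + αdisj) * f a b
      + (αrecip - 2 * αchain + αdisj) * f b a := by
      intro a b hab
      rw [key a b hab, (hRC a).1, (hRC a).2, (hRC b).1, (hRC b).2]; ring
    obtain ⟨⟨⟨a, b⟩, hab⟩, hx⟩ := Function.ne_iff.mp hv0
    have hfab : f a b ≠ 0 := by
      rw [← hf, ext0, dif_pos hab]; exact hx
    have h1 := key3 a b hab
    have h2 := key3 b a (Ne.symm hab)
    by_cases hs : f a b + f b a = 0
    · left
      apply mul_right_cancel₀ hfab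
      rw [eq_neg_of_add_eq_zero_right hs] at h1
      linarith
    · right; left
      apply mul_right_cancel₀ hs
      linarith
  · right; right
    push Not at hRC
    obtain ⟨a, ha⟩ := hRC
    have h1 := eR a
    have h2 := eC a
    have hdet : (2 * (μ - (1 + (((N : ℝ) - 3) / 2) * αconv - αchain + (((N : ℝ) - 3) / 2) * αdiv -
          ((N : ℝ) - 3) * αdisj))) ^ 2 = ((N : ℝ) * ((N : ℝ) - 2) * (αconv - αdiv) ^ 2 +
            (αconv + αdiv - 2 * ((N : ℝ) - 3) * (αchain - αdisj) - 2 * αrecip) ^ 2) := by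
      obtain ⟨p, hp⟩ : ∃ p, p = μ - ((1 - αconv - αdiv + αdisj) + ((N : ℝ) - 1) * αdiv - αchain
        - αdisj * ((N : ℝ) - 2)) := ⟨_, rfl⟩
      obtain ⟨q, hq⟩ : ∃ q, q = (αrecip - 2 * αchain + αdisj) - αconv + αchain * ((N : ℝ) - 1)
        - αdisj * ((N : ℝ) - 2) := ⟨_, rfl⟩
      obtain ⟨s, hs⟩ : ∃ s, s = μ - ((1 - αconv - αdiv + αdisj) + ((N : ℝ) - 1) * αconv - αchain
        - αdisj * ((N : ℝ) - 2)) := ⟨_, rfl⟩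
      obtain ⟨t, ht⟩ : ∃ t, t = (αrecip - 2 * αchain + αdisj) - αdiv + αchain * ((N : ℝ) - 1)
        - αdisj * ((N : ℝ) - 2) := ⟨_, rfl⟩
      have e1 : p * R a = q * C a := by rw [hp, hq]; linarith
      have e2 : s * C a = t * R a := by rw [hs, ht]; linarith
      have hd : p * s = q * t := by
        by_cases hRa : R a = 0
        · have hCa := ha hRa
          apply mul_right_cancel₀ hCa
          linear_combination p * e2 + t * e1
        · apply mul_right_cancel₀ hRa
          linear_combination s * e1 + q * e2
      rw [hp, hq, hs, ht] at hd
      linear_combination 4 * hd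
    have hnn := sq_nonneg (2 * (μ - (1 + (((N : ℝ) - 3) / 2) * αconv - αchain + (((N : ℝ) - 3) / 2) * αdiv -
          ((N : ℝ) - 3) * αdisj)))
    rw [hdet] at hnn
    rw [← Real.sq_sqrt hnn] at hdet
    rcases sq_eq_sq_iff_eq_or_eq_neg.mp hdet with h | h
    · left; linarith
    · right; linarith
end
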